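/- Every regular semilocal Noetherian integral domain is a unique factorization domain. -/

import Mathlib

/-- A Noetherian local ring is *regular* if its maximal ideal can be generated by a family of
elements whose cardinality equals the Krull dimension of the ring. -/
def IsRegularLocal (R : Type) [CommRing R] [IsLocalRing R] : Prop :=
  IsNoetherianRing R ∧
    ∃ s : Finset R, Ideal.span (s : Set R) = IsLocalRing.maximalIdeal R ∧
      (s.card : WithBot ℕ∞) = ringKrullDim R

/-!
A regular local ring is a domain, in which every `x ∈ 𝔪 \ 𝔪²` is prime with regular quotient;
change of rings along `A → A ⧸ (x)` then shows by induction that finite modules have finite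
projective dimension. An invertible module over a localization `B` of `A` is the base change of an
ideal of `A`, hence has a finite free resolution, hence is stably free, hence free. So `A[1/x]` has
trivial class group; its localizations have smaller dimension than `A` and are factorial by
induction, which makes `A[1/x]` factorial, and Nagata's criterion passes this down to `A`.
Finally, a locally factorial Noetherian domain with trivial class group is factorial, because
its height one primes are invertible, and semilocal domains have trivial class group.
-/

open IsLocalRing CategoryTheory
open scoped TensorProduct nonZeroDivisors

universe u v

section LocalRing

variable {A : Type*} [CommRing A] [IsLocalRing A]

lemma isLocalRing_quotient_span_singleton {x : A} (hx : x ∈ maximalIdeal A) :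
    IsLocalRing (A ⧸ Ideal.span {x}) :=
  have : Nontrivial (A ⧸ Ideal.span {x}) :=
    Ideal.Quotient.nontrivial_iff.mpr (Ideal.span_singleton_ne_top hx)
  .of_surjective' (Ideal.Quotient.mk _) Ideal.Quotient.mk_surjective

variable [IsNoetherianRing A]

lemma exists_span_insert_eq_maximalIdeal {x : A} (hx : x ∈ maximalIdeal A)
    (hx2 : x ∉ maximalIdeal A ^ 2) :
    ∃ s : Finset A, Ideal.span (insert x s) = maximalIdeal A ∧
      s.card + 1 = (maximalIdeal A).spanFinrank := by
  classical
  obtain ⟨t, ht_card, ht_span⟩ :=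
    (IsNoetherian.noetherian (maximalIdeal A)).exists_span_finset_card_eq_spanFinrank
  have ht_mem {y : A} (hy : y ∈ t) : y ∈ maximalIdeal A := ht_span ▸ Submodule.subset_span hy
  obtain ⟨f, -, hf⟩ := Submodule.mem_span_finset.mp (ht_span ▸ hx)
  obtain ⟨a, ha, hfa⟩ : ∃ a ∈ t, IsUnit (f a) := by
    by_contra! hf_nonunit
    refine hx2 (hf ▸ sum_mem fun a ha ↦ ?_)
    exact pow_two (maximalIdeal A) ▸ Ideal.mul_mem_mul (hf_nonunit a ha) (ht_mem ha)
  refine ⟨t.erase a, le_antisymm ?_ ?_, ?_⟩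
  · rw [Ideal.span_le]
    rintro y (rfl | hy)
    exacts [hx, ht_mem (Finset.mem_of_mem_erase hy)]
  · have ha_span : a ∈ Ideal.span (insert x ↑(t.erase a)) := by
      rw [← Ideal.unit_mul_mem_iff_mem _ hfa, ← smul_eq_mul,
        eq_sub_of_add_eq (Finset.add_sum_erase t (fun b ↦ f b • b) ha), hf]
      refine sub_mem (Ideal.subset_span (Set.mem_insert _ _)) (sum_mem fun b hb ↦ ?_)
      exact Ideal.mul_mem_left _ _ (Ideal.subset_span (Set.mem_insert_of_mem _ hb))
    rw [← ht_span, Submodule.span_le]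
    intro y hy
    by_cases hya : y = a
    · exact hya ▸ ha_span
    · exact Ideal.subset_span (Set.mem_insert_of_mem _ (Finset.mem_erase.mpr ⟨hya, hy⟩))
  · rw [Finset.card_erase_add_one ha, ht_card]

lemma spanFinrank_maximalIdeal_quotient_add_one_le {x : A} (hx : x ∈ maximalIdeal A)
    (hx2 : x ∉ maximalIdeal A ^ 2) [IsLocalRing (A ⧸ Ideal.span {x})] :
    (maximalIdeal (A ⧸ Ideal.span {x})).spanFinrank + 1 ≤ (maximalIdeal A).spanFinrank := by
  obtain ⟨s, hs_span, hs_card⟩ := exists_span_insert_eq_maximalIdeal hx hx2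
  set π := Ideal.Quotient.mk (Ideal.span {x})
  have hπ : Function.Surjective π := Ideal.Quotient.mk_surjective
  have h_span : maximalIdeal (A ⧸ Ideal.span {x}) = Ideal.span (π '' s) := by
    rw [← IsLocalRing.map_maximalIdeal_of_surjective π hπ, ← hs_span, Ideal.map_span,
      Set.image_insert_eq, Ideal.span_insert, Ideal.Quotient.mk_singleton_self,
      Ideal.span_singleton_zero, bot_sup_eq]
  rw [h_span, ← hs_card]
  gcongr
  calc (Ideal.span (π '' s)).spanFinrank ≤ (π '' s).ncard :=
        Submodule.spanFinrank_span_le_ncard_of_finite (s.finite_toSet.image π)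
    _ ≤ (s : Set A).ncard := Set.ncard_image_le s.finite_toSet
    _ = s.card := Set.ncard_coe_finset s

end LocalRing

section RegularLocalRing

variable {A : Type*} [CommRing A]

lemma ringKrullDim_le_quotient_add_one [IsLocalRing A] [IsNoetherianRing A] {x : A}
    (hx : x ∈ maximalIdeal A) :
    ringKrullDim A ≤ ringKrullDim (A ⧸ Ideal.span {x}) + 1 := by
  rw [← maximalIdeal_height_eq_ringKrullDim]
  exact Ideal.height_le_ringKrullDim_quotient_add_one hx

variable [IsRegularLocalRing A]

lemma isRegularLocalRing_quotient_span_singleton {x : A} (hx : x ∈ maximalIdeal A)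
    (hx2 : x ∉ maximalIdeal A ^ 2) : IsRegularLocalRing (A ⧸ Ideal.span {x}) := by
  have := isLocalRing_quotient_span_singleton hx
  refine .of_spanFinrank_maximalIdeal_le _ ?_
  refine (WithBot.add_le_add_iff_right' (c := 1) (by decide) (by decide)).mp ?_
  calc ((maximalIdeal (A ⧸ Ideal.span {x})).spanFinrank : WithBot ℕ∞) + 1
    _ ≤ (maximalIdeal A).spanFinrank := by
      exact_mod_cast spanFinrank_maximalIdeal_quotient_add_one_le hx hx2
    _ = ringKrullDim A := IsRegularLocalRing.spanFinrank_maximalIdeal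
    _ ≤ ringKrullDim (A ⧸ Ideal.span {x}) + 1 := ringKrullDim_le_quotient_add_one hx

lemma spanFinrank_maximalIdeal_quotient_add_one {x : A} (hx : x ∈ maximalIdeal A)
    (hx2 : x ∉ maximalIdeal A ^ 2) [IsRegularLocalRing (A ⧸ Ideal.span {x})] :
    (maximalIdeal (A ⧸ Ideal.span {x})).spanFinrank + 1 = (maximalIdeal A).spanFinrank := by
  refine le_antisymm (spanFinrank_maximalIdeal_quotient_add_one_le hx hx2) ?_
  have h_dim := ringKrullDim_le_quotient_add_one hx
  rw [← IsRegularLocalRing.spanFinrank_maximalIdeal (R := A),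
    ← IsRegularLocalRing.spanFinrank_maximalIdeal (R := A ⧸ Ideal.span {x})] at h_dim
  exact_mod_cast h_dim

end RegularLocalRing

lemma exists_mem_maximalIdeal_notMem_minimalPrimes {A : Type*} [CommRing A] [IsLocalRing A]
    [IsNoetherianRing A] (hA : ringKrullDim A ≠ 0) :
    ∃ x ∈ maximalIdeal A, x ∉ maximalIdeal A ^ 2 ∧ ∀ p ∈ minimalPrimes A, x ∉ p := by
  classical
  have h_fin := minimalPrimes.finite_of_isNoetherianRing A
  have h_height : (maximalIdeal A).height ≠ 0 := by
    rwa [← maximalIdeal_height_eq_ringKrullDim, ← WithBot.coe_zero, Ne, WithBot.coe_inj] at hA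
  let avoided := insert (maximalIdeal A ^ 2) h_fin.toFinset
  have h_prime (I) (hI : I ∈ avoided) (hI_ne : I ≠ maximalIdeal A ^ 2) : I.IsPrime :=
    (h_fin.mem_toFinset.mp ((Finset.mem_insert.mp hI).resolve_left hI_ne)).1.1
  have h_not_le : ¬ ∃ I ∈ avoided, maximalIdeal A ≤ I := by
    rintro ⟨I, hI, hle⟩
    rcases Finset.mem_insert.mp hI with rfl | hI
    · have : IsField A := by
        rw [← subsingleton_cotangentSpace_iff]
        exact (maximalIdeal A).cotangent_subsingleton_iff.mpr <|
          (pow_two (maximalIdeal A)).symm.trans (le_antisymm (Ideal.pow_le_self two_ne_zero) hle)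
      rw [isField_iff_maximalIdeal_eq] at this
      exact h_height (this ▸ Ideal.height_bot)
    · have hI := h_fin.mem_toFinset.mp hI
      rw [← le_antisymm hle (le_maximalIdeal hI.1.1.ne_top)] at hI
      exact h_height (Ideal.height_eq_zero_iff.mpr hI)
  -- Prime avoidance allows two non-prime ideals; here only `maximalIdeal A ^ 2` is not prime.
  have := (Ideal.subset_union_prime (maximalIdeal A ^ 2) (maximalIdeal A ^ 2)
    fun I hI hI_ne _ ↦ h_prime I hI hI_ne).not.mpr h_not_le
  obtain ⟨x, hx, hx_avoid⟩ := Set.not_subset.mp this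
  simp only [avoided, Finset.coe_insert, Set.Finite.coe_toFinset, Set.mem_iUnion, SetLike.mem_coe,
    not_exists, Set.mem_insert_iff] at hx_avoid
  exact ⟨x, hx, hx_avoid _ (.inl rfl), fun p hp ↦ hx_avoid p (.inr hp)⟩

lemma isDomain_of_isPrime_span_singleton {A : Type*} [CommRing A] [IsNoetherianRing A] {x : A}
    (hx : x ∈ (⊥ : Ideal A).jacobson) (hx_prime : (Ideal.span {x}).IsPrime)
    (hx_min : ∀ p ∈ minimalPrimes A, x ∉ p) : IsDomain A := by
  obtain ⟨q, hq, hqx⟩ :=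
    Ideal.exists_minimalPrimes_le (I := (⊥ : Ideal A)) (J := Ideal.span {x}) bot_le
  have hq_prime : q.IsPrime := hq.1.1
  have hq_le : q ≤ Ideal.span {x} • q := fun y hy ↦ by
    obtain ⟨z, rfl⟩ := Ideal.mem_span_singleton'.mp (hqx hy)
    rw [mul_comm]
    exact Ideal.mul_mem_mul (Ideal.mem_span_singleton_self x)
      ((hq_prime.mem_or_mem hy).resolve_right (hx_min q hq))
  obtain rfl : q = ⊥ := Submodule.eq_bot_of_le_smul_of_le_jacobson_bot _ q
    (IsNoetherian.noetherian q) hq_le ((Ideal.span_singleton_le_iff_mem _).mpr hx)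
  exact IsDomain.of_bot_isPrime A

lemma spanFinrank_maximalIdeal_eq_zero_iff_isField {A : Type*} [CommRing A] [IsLocalRing A]
    [IsNoetherianRing A] : (maximalIdeal A).spanFinrank = 0 ↔ IsField A := by
  rw [Submodule.spanFinrank_eq_zero_iff_eq_bot (IsNoetherian.noetherian _),
    isField_iff_maximalIdeal_eq]

lemma isDomain_of_isRegularLocalRing (A : Type*) [CommRing A] [IsRegularLocalRing A] :
    IsDomain A := by
  induction hn : (maximalIdeal A).spanFinrank generalizing A with
  | zero => exact (spanFinrank_maximalIdeal_eq_zero_iff_isField.mp hn).isDomain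
  | succ n ih =>
    have h_dim : ringKrullDim A ≠ 0 := by
      rw [← IsRegularLocalRing.spanFinrank_maximalIdeal, hn]
      exact_mod_cast n.succ_ne_zero
    obtain ⟨x, hx, hx2, hx_min⟩ := exists_mem_maximalIdeal_notMem_minimalPrimes h_dim
    have := isRegularLocalRing_quotient_span_singleton hx hx2
    have : IsDomain (A ⧸ Ideal.span {x}) :=
      ih _ (Nat.succ.inj ((spanFinrank_maximalIdeal_quotient_add_one hx hx2).trans hn))
    exact isDomain_of_isPrime_span_singleton (maximalIdeal_le_jacobson ⊥ hx)
      ((Ideal.Quotient.isDomain_iff_prime _).mp this) hx_min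

lemma prime_of_mem_maximalIdeal_of_notMem_sq {A : Type*} [CommRing A] [IsRegularLocalRing A]
    {x : A} (hx : x ∈ maximalIdeal A) (hx2 : x ∉ maximalIdeal A ^ 2) : Prime x := by
  have := isRegularLocalRing_quotient_span_singleton hx hx2
  have hx0 : x ≠ 0 := by
    rintro rfl
    exact hx2 (zero_mem _)
  rw [← Ideal.span_singleton_prime hx0, ← Ideal.Quotient.isDomain_iff_prime]
  exact isDomain_of_isRegularLocalRing _

lemma exists_prime_mem_maximalIdeal {A : Type*} [CommRing A] [IsRegularLocalRing A]
    (hA : ¬ IsField A) : ∃ x ∈ maximalIdeal A, x ∉ maximalIdeal A ^ 2 ∧ Prime x := by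
  have h_dim : ringKrullDim A ≠ 0 := by
    rwa [← IsRegularLocalRing.spanFinrank_maximalIdeal, Ne, Nat.cast_eq_zero,
      spanFinrank_maximalIdeal_eq_zero_iff_isField]
  obtain ⟨x, hx, hx2, -⟩ := exists_mem_maximalIdeal_notMem_minimalPrimes h_dim
  exact ⟨x, hx, hx2, prime_of_mem_maximalIdeal_of_notMem_sq hx hx2⟩

section StablyFree

variable {B K F M : Type*} [CommRing B] [AddCommGroup K] [Module B K] [AddCommGroup F]
  [Module B F] [AddCommGroup M] [Module B M]

lemma exists_linearEquiv_prod_of_exact [Module.Projective B M] {f : K →ₗ[B] F}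
    {g : F →ₗ[B] M} (hf : Function.Injective f) (hg : Function.Surjective g)
    (hfg : Function.Exact f g) : Nonempty (F ≃ₗ[B] K × M) := by
  obtain ⟨s, hs⟩ := Module.projective_lifting_property g .id hg
  exact ⟨(hfg.splitSurjectiveEquiv hf ⟨s, hs⟩).1⟩

lemma isStablyFree_of_linearEquiv_prod [Module.Finite B F] [Module.Free B F]
    [Module.IsStablyFree B K] (e : F ≃ₗ[B] K × M) : Module.IsStablyFree B M := by
  obtain ⟨N, _, _, _, _, _⟩ := Module.IsStablyFree.exist_free_prod B K
  have : Module.Finite B K :=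
    .of_surjective (LinearMap.fst B K M ∘ₗ e.toLinearMap)
      (Prod.fst_surjective.comp e.surjective)
  have : Module.Free B (M × (K × N)) :=
    .of_equiv <| e.prodCongr (.refl B N) ≪≫ₗ
      (LinearEquiv.prodComm B K M).prodCongr (.refl B N) ≪≫ₗ LinearEquiv.prodAssoc B M K N
  exact .of_free_prod B M (K × N)

end StablyFree

section ProjectiveDimension

variable {A : Type u} [CommRing A] {K P M : Type u} [AddCommGroup K] [Module A K]
  [AddCommGroup P] [Module A P] [AddCommGroup M] [Module A M]

lemma hasProjectiveDimensionLE_zero_iff :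
    HasProjectiveDimensionLE (ModuleCat.of A M) 0 ↔ Module.Projective A M := by
  rw [IsProjective.iff_projective, HasProjectiveDimensionLE,
    projective_iff_hasProjectiveDimensionLT_one]

lemma hasProjectiveDimensionLE_succ_iff_of_exact [Module.Projective A P] {f : K →ₗ[A] P}
    {g : P →ₗ[A] M} (hf : Function.Injective f) (hg : Function.Surjective g)
    (hfg : Function.Exact f g) (n : ℕ) :
    HasProjectiveDimensionLE (ModuleCat.of A M) (n + 1) ↔
      HasProjectiveDimensionLE (ModuleCat.of A K) n :=
  have := ModuleCat.shortComplex_shortExact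
    (ModuleCat.shortComplexOfCompEqZero f g hfg.linearMap_comp_eq_zero) hfg hf hg
  this.hasProjectiveDimensionLT_X₃_iff n (inferInstanceAs (Projective (ModuleCat.of A P)))

lemma quotSMulTop_map_injective_of_exact {f : K →ₗ[A] P} {g : P →ₗ[A] M} {x : A}
    (hf : Function.Injective f) (hfg : Function.Exact f g) (hx : IsSMulRegular M x) :
    Function.Injective (QuotSMulTop.map x f) := by
  rw [← LinearMap.exact_zero_iff_injective (QuotSMulTop x PUnit), ← map_zero (QuotSMulTop.map x)]
  exact QuotSMulTop.map_first_exact_on_four_term_exact_of_isSMulRegular_last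
    ((LinearMap.exact_zero_iff_injective _ f).mpr hf) hfg hx

variable [IsLocalRing A] [IsNoetherianRing A] [Module.Finite A M] {n : ℕ}

lemma isStablyFree_tensorProduct (B : Type v) [CommRing B] [Algebra A B] [Module.Flat A B]
    [Module.Projective B (B ⊗[A] M)] (hM : HasProjectiveDimensionLE (ModuleCat.of A M) n) :
    Module.IsStablyFree B (B ⊗[A] M) := by
  induction n generalizing M with
  | zero =>
    have := hasProjectiveDimensionLE_zero_iff.mp hM
    have : Module.Free A M := Module.free_of_flat_of_isLocalRing
    infer_instance
  | succ n ih =>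
    obtain ⟨F, _, _, _, _, g, hg⟩ := Module.exists_finite_presentation A M
    let ι := (LinearMap.ker g).subtype
    have hι : Function.Injective ι := Subtype.val_injective
    have hιg : Function.Exact ι g := g.exact_subtype_ker_map
    obtain ⟨e⟩ : Nonempty (B ⊗[A] F ≃ₗ[B] (B ⊗[A] LinearMap.ker g) × (B ⊗[A] M)) :=
      exists_linearEquiv_prod_of_exact (f := ι.baseChange B) (g := g.baseChange B)
        (Module.Flat.lTensor_preserves_injective_linearMap ι hι) (g.lTensor_surjective B hg)
        (lTensor_exact B hιg hg)
    have : Module.Projective B (B ⊗[A] LinearMap.ker g) :=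
      .of_split (e.symm.toLinearMap ∘ₗ .inl B _ _) (.fst B _ _ ∘ₗ e.toLinearMap) (by ext; simp)
    have := ih ((hasProjectiveDimensionLE_succ_iff_of_exact hι hg hιg n).mp hM)
    exact isStablyFree_of_linearEquiv_prod e

lemma hasProjectiveDimensionLE_of_quotSMulTop {x : A} (hx : x ∈ maximalIdeal A) (hxA : x ∈ A⁰)
    (hxM : IsSMulRegular M x)
    (hM : HasProjectiveDimensionLE (ModuleCat.of (A ⧸ Ideal.span {x}) (QuotSMulTop x M)) n) :
    HasProjectiveDimensionLE (ModuleCat.of A M) n := by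
  induction n generalizing M with
  | zero =>
    rw [hasProjectiveDimensionLE_zero_iff] at hM ⊢
    have := isLocalRing_quotient_span_singleton hx
    have : Module.Finite (A ⧸ Ideal.span {x}) (QuotSMulTop x M) :=
      .of_restrictScalars_finite A _ _
    have h_free : Module.Free (A ⧸ Ideal.span {x}) (QuotSMulTop x M) :=
      Module.free_of_flat_of_isLocalRing
    have := Module.finitePresentation_of_finite A M
    have : Module.Free A M :=
      (Module.free_quotSMulTop_iff_free A M (maximalIdeal_le_jacobson ⊥ hx) hxM).mp h_free
    infer_instance
  | succ n ih =>
    obtain ⟨F, _, _, _, _, g, hg⟩ := Module.exists_finite_presentation A M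
    let ι := (LinearMap.ker g).subtype
    have hι : Function.Injective ι := Subtype.val_injective
    have hιg : Function.Exact ι g := g.exact_subtype_ker_map
    have hxK : IsSMulRegular (LinearMap.ker g) x :=
      (Module.Flat.isSMulRegular_of_nonZeroDivisors hxA).submodule _ _
    have hι_quot : Function.Injective (QuotSMulTop.map x ι) :=
      quotSMulTop_map_injective_of_exact hι hιg hxM
    refine (hasProjectiveDimensionLE_succ_iff_of_exact hι hg hιg n).mpr (ih hxK ?_)
    refine (hasProjectiveDimensionLE_succ_iff_of_exact
      (f := (QuotSMulTop.map x ι).extendScalarsOfSurjective Ideal.Quotient.mk_surjective)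
      (g := (QuotSMulTop.map x g).extendScalarsOfSurjective Ideal.Quotient.mk_surjective)
      ?_ (QuotSMulTop.map_surjective x hg) (QuotSMulTop.map_exact x hιg hg) n).mp hM
    exact hι_quot

end ProjectiveDimension

lemma hasProjectiveDimensionLE_spanFinrank_maximalIdeal (A : Type u) [CommRing A]
    [IsRegularLocalRing A] (M : Type u) [AddCommGroup M] [Module A M] [Module.Finite A M] :
    HasProjectiveDimensionLE (ModuleCat.of A M) (maximalIdeal A).spanFinrank := by
  induction hn : (maximalIdeal A).spanFinrank generalizing A M with
  | zero =>
    let := (spanFinrank_maximalIdeal_eq_zero_iff_isField.mp hn).toField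
    exact hasProjectiveDimensionLE_zero_iff.mpr inferInstance
  | succ n ih =>
    have hA : ¬ IsField A := by
      rw [← spanFinrank_maximalIdeal_eq_zero_iff_isField, hn]
      exact n.succ_ne_zero
    obtain ⟨x, hx, hx2, hx_prime⟩ := exists_prime_mem_maximalIdeal hA
    have := isDomain_of_isRegularLocalRing A
    have := isRegularLocalRing_quotient_span_singleton hx hx2
    have hn' : (maximalIdeal (A ⧸ Ideal.span {x})).spanFinrank = n :=
      Nat.succ.inj ((spanFinrank_maximalIdeal_quotient_add_one hx hx2).trans hn)
    have hxA : x ∈ A⁰ := mem_nonZeroDivisors_of_ne_zero hx_prime.ne_zero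
    -- `x` need not be regular on `M`, but it is on the first syzygy.
    obtain ⟨F, _, _, _, _, g, hg⟩ := Module.exists_finite_presentation A M
    have hxK : IsSMulRegular (LinearMap.ker g) x :=
      (Module.Flat.isSMulRegular_of_nonZeroDivisors hxA).submodule _ _
    have : Module.Finite (A ⧸ Ideal.span {x}) (QuotSMulTop x (LinearMap.ker g)) :=
      .of_restrictScalars_finite A _ _
    rw [hasProjectiveDimensionLE_succ_iff_of_exact (LinearMap.ker g).subtype_injective hg
      g.exact_subtype_ker_map]
    exact hasProjectiveDimensionLE_of_quotSMulTop hx hxA hxK (ih (A ⧸ Ideal.span {x}) _ hn')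

lemma subsingleton_classGroup_of_isLocalization (A : Type u) [CommRing A] [IsRegularLocalRing A]
    (S : Submonoid A) (B : Type v) [CommRing B] [IsDomain B] [Algebra A B] [IsLocalization S B] :
    Subsingleton (ClassGroup B) := by
  refine (ClassGroup.equivPic B).subsingleton_congr.mpr ?_
  refine CommRing.Pic.subsingleton_iff.mpr fun M _ _ _ ↦ ?_
  obtain ⟨J, ⟨e⟩⟩ := Module.Invertible.exists_linearEquiv_ideal B M
  have := IsLocalization.flat B S
  let I := J.under A
  let e' : B ⊗[A] I ≃ₗ[B] M :=
    (IsLocalizedModule.isBaseChange S B (Algebra.idealMap I (S := B))).equiv ≪≫ₗ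
      .ofEq _ _ (IsLocalization.map_under S B J) ≪≫ₗ e.symm
  have : Module.Projective B (B ⊗[A] I) := .of_equiv e'.symm
  have := isStablyFree_tensorProduct B (hasProjectiveDimensionLE_spanFinrank_maximalIdeal A I)
  have := Module.IsStablyFree.equiv e'
  exact Module.free_of_isStablyFree_of_invertible B M

section InvertibleIdeal

variable {R : Type*} [CommRing R]

lemma mem_mul_colon_span_singleton {I : Ideal R} [Module.Projective R I] (a : I) :
    (a : R) ∈ I * (Ideal.span {(a : R)}).colon (I : Set R) := by
  obtain ⟨f, hf⟩ := Module.projective_def.mp ‹Module.Projective R I›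
  have hf_colon (b : I) : f a b ∈ (Ideal.span {(a : R)}).colon (I : Set R) := by
    refine Submodule.mem_colon.mpr fun y hy ↦ ?_
    rw [Ideal.mem_span_singleton']
    have h_swap : (a : R) • (⟨y, hy⟩ : I) = y • a := Subtype.ext (mul_comm (a : R) y)
    refine ⟨f ⟨y, hy⟩ b, ?_⟩
    calc f ⟨y, hy⟩ b * a = f ((a : R) • ⟨y, hy⟩) b := by
          rw [map_smul, Finsupp.smul_apply, smul_eq_mul, mul_comm]
      _ = f a b • y := by
          rw [h_swap, map_smul, Finsupp.smul_apply, smul_eq_mul, smul_eq_mul, mul_comm]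
  have h_sum : ∑ b ∈ (f a).support, (b : R) * f a b = a := by
    simpa [Finsupp.linearCombination_apply, Finsupp.sum, mul_comm] using
      congrArg Subtype.val (hf a)
  exact h_sum.subst (motive := (· ∈ _)) <|
    sum_mem fun b _ ↦ Ideal.mul_mem_mul b.2 (hf_colon b)

variable [IsDomain R]

lemma isUnit_coeIdeal_of_projective {I : Ideal R} (hI : I ≠ ⊥) [Module.Projective R I]
    (K : Type*) [Field K] [Algebra R K] [IsFractionRing R K] :
    IsUnit (I : FractionalIdeal R⁰ K) := by
  obtain ⟨a, ha, ha0⟩ := Submodule.exists_mem_ne_zero_of_ne_bot hI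
  have h_mul : I * (Ideal.span {a}).colon (I : Set R) = Ideal.span {a} := by
    refine le_antisymm (Ideal.mul_le.mpr fun y hy r hr ↦ ?_) ?_
    · rw [mul_comm]
      exact Submodule.mem_colon.mp hr y hy
    · rw [Ideal.span_singleton_le_iff_mem]
      exact mem_mul_colon_span_singleton (⟨a, ha⟩ : I)
  have h_unit : IsUnit ((Ideal.span {a} : Ideal R) : FractionalIdeal R⁰ K) := by
    rw [FractionalIdeal.coeIdeal_span_singleton]
    exact .of_mul_eq_one _ (FractionalIdeal.spanSingleton_mul_inv K (by simpa using ha0))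
  rw [← h_mul, FractionalIdeal.coeIdeal_mul] at h_unit
  exact isUnit_of_mul_isUnit_left h_unit

lemma projective_of_isPrincipal (I : Ideal R) [I.IsPrincipal] : Module.Projective R I := by
  rcases eq_or_ne I ⊥ with rfl | hI
  · infer_instance
  · exact .of_equiv (Ideal.isoBaseOfIsPrincipal hI)

lemma projective_of_isPrincipal_localization_maximal [IsNoetherianRing R] {I : Ideal R}
    (hI : ∀ (P : Ideal R) [P.IsMaximal],
      (I.map (algebraMap R (Localization.AtPrime P))).IsPrincipal) : Module.Projective R I := by
  have := Module.finitePresentation_of_finite R I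
  refine Module.projective_of_localization_maximal' (fun P _ ↦ Localization.AtPrime P)
    (fun P _ ↦ I.map (algebraMap R (Localization.AtPrime P)))
    (fun P _ ↦ Algebra.idealMap I (S := Localization.AtPrime P)) fun P _ ↦ ?_
  have := hI P
  exact projective_of_isPrincipal _

end InvertibleIdeal

lemma isPrincipal_map_of_height_eq_one {R : Type*} [CommRing R] (M : Submonoid R) (S : Type*)
    [CommRing S] [Algebra R S] [IsLocalization M S] [IsDomain S] [UniqueFactorizationMonoid S]
    {p : Ideal R} [p.IsPrime] (hp : p.height = 1) : (p.map (algebraMap R S)).IsPrincipal := by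
  by_cases h : Disjoint (M : Set R) p
  · have := IsLocalization.isPrime_of_isPrime_disjoint M S p inferInstance h
    exact UniqueFactorizationMonoid.isPrincipal_of_height_eq_one
      ((IsLocalization.height_map_of_disjoint M p h).trans hp)
  · rw [← IsLocalization.map_algebraMap_ne_top_iff_disjoint M S, not_not] at h
    exact h ▸ inferInstance

lemma uniqueFactorizationMonoid_of_localization_maximal {R : Type*} [CommRing R] [IsDomain R]
    [IsNoetherianRing R] [Subsingleton (ClassGroup R)]
    (h : ∀ (P : Ideal R) [P.IsMaximal], UniqueFactorizationMonoid (Localization.AtPrime P)) :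
    UniqueFactorizationMonoid R := by
  refine .of_forall_isPrincipal_of_height_eq_one fun p _ hp ↦ ?_
  have : Module.Projective R p := projective_of_isPrincipal_localization_maximal fun P _ ↦
    have := h P
    isPrincipal_map_of_height_eq_one P.primeCompl _ hp
  have hp0 : p ≠ ⊥ := by
    rintro rfl
    exact zero_ne_one (Ideal.height_bot.symm.trans hp)
  exact ClassGroup.isPrincipal_of_isUnit_coeIdeal p
    (isUnit_coeIdeal_of_projective hp0 (FractionRing R))

lemma isRegularRing_of_isLocalization {A : Type*} [CommRing A] [IsRegularRing A]
    (M : Submonoid A) (S : Type*) [CommRing S] [Algebra A S] [IsLocalization M S] :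
    IsRegularRing S := by
  have := IsLocalization.isNoetherianRing M S inferInstance
  refine isRegularRing_iff.mpr fun P _ ↦ ?_
  have := IsLocalization.isLocalization_isLocalization_atPrime_isLocalization M
    (Localization.AtPrime P) P
  exact .of_ringEquiv (IsLocalization.algEquiv (P.under A).primeCompl
    (Localization.AtPrime (P.under A)) (Localization.AtPrime P)).toRingEquiv

lemma ringKrullDim_localization_lt_of_mem {A B : Type*} [CommRing A] [IsLocalRing A]
    [IsNoetherianRing A] (M : Submonoid A) [CommRing B] [Algebra A B] [IsLocalization M B]
    {x : A} (hx : x ∈ maximalIdeal A) (hxM : x ∈ M) (P : Ideal B) [P.IsPrime] :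
    ringKrullDim (Localization.AtPrime P) < ringKrullDim A := by
  have hxP : x ∉ P.under A := fun h ↦
    Ideal.IsPrime.ne_top' (P.eq_top_of_isUnit_mem h (IsLocalization.map_units B ⟨x, hxM⟩))
  have h_lt : P.under A < maximalIdeal A :=
    (le_maximalIdeal Ideal.IsPrime.ne_top').lt_of_ne fun h ↦ hxP (h ▸ hx)
  rw [IsLocalization.AtPrime.ringKrullDim_eq_height P, ← IsLocalization.height_under M P,
    ← maximalIdeal_height_eq_ringKrullDim, WithBot.coe_lt_coe]
  exact Ideal.height_strict_mono_of_isPrime_of_isPrime h_lt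

lemma uniqueFactorizationMonoid_of_isRegularRing_of_isLocalRing (A : Type*) [CommRing A]
    [IsRegularRing A] [IsLocalRing A] : UniqueFactorizationMonoid A := by
  induction hn : ringKrullDim A using WellFoundedLT.induction generalizing A with | _ n ih
  have := IsRegularLocalRing.of_isRegularRing_of_isLocalRing A
  have := isDomain_of_isRegularLocalRing A
  by_cases hA : IsField A
  · let := hA.toField
    infer_instance
  obtain ⟨x, hx, -, hx_prime⟩ := exists_prime_mem_maximalIdeal hA
  let B := Localization.Away x
  have : IsDomain B := IsLocalization.Away.isDomain B hx_prime.ne_zero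
  have : IsRegularRing B := isRegularRing_of_isLocalization (.powers x) B
  have := subsingleton_classGroup_of_isLocalization A (.powers x) B
  refine (UniqueFactorizationMonoid.iff_of_isLocalizationAway_of_prime hx_prime B).mpr ?_
  refine uniqueFactorizationMonoid_of_localization_maximal fun P _ ↦ ?_
  have := isRegularRing_of_isLocalization P.primeCompl (Localization.AtPrime P)
  exact ih _ (hn ▸ ringKrullDim_localization_lt_of_mem (.powers x) hx
    (Submonoid.mem_powers x) P) _ rfl

theorem regular_semilocal_domain_is_UFD_general (R : Type*) [CommRing R] [IsDomain R]
    [IsRegularRing R] [Subsingleton (ClassGroup R)] : UniqueFactorizationMonoid R :=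
  uniqueFactorizationMonoid_of_localization_maximal fun P _ ↦
    have := isRegularRing_of_isLocalization P.primeCompl (Localization.AtPrime P)
    uniqueFactorizationMonoid_of_isRegularRing_of_isLocalRing _

lemma IsRegularLocal.isRegularLocalRing {A : Type} [CommRing A] [IsLocalRing A]
    (hA : IsRegularLocal A) : IsRegularLocalRing A := by
  obtain ⟨_, s, hs_span, hs_card⟩ := hA
  refine .of_spanFinrank_maximalIdeal_le _ ?_
  rw [← hs_card, ← hs_span, ← Set.ncard_coe_finset]
  exact_mod_cast Submodule.spanFinrank_span_le_ncard_of_finite s.finite_toSet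

/-- Lemma 0.12 of Saltman, "Cyclic algebras over p-adic curves".
A regular semilocal Noetherian integral domain is a unique factorization domain.  Here
*semilocal* means having only finitely many maximal ideals, and *regular* means that all
localizations at primes are regular local rings. -/
theorem regular_semilocal_domain_is_UFD
    (R : Type) [CommRing R] [IsDomain R] [IsNoetherianRing R]
    (hsemilocal : {I : Ideal R | I.IsMaximal}.Finite)
    (hregular : ∀ (P : Ideal R) [P.IsPrime], IsRegularLocal (Localization.AtPrime P)) :
    UniqueFactorizationMonoid R := by
  have : IsRegularRing R := isRegularRing_iff.mpr fun P _ ↦ (hregular P).isRegularLocalRing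
  have := hsemilocal.to_subtype
  have : Finite (MaximalSpectrum R) :=
    .of_injective (β := {I : Ideal R | I.IsMaximal}) (fun P ↦ ⟨P.asIdeal, P.isMaximal⟩)
      fun P Q h ↦ MaximalSpectrum.ext (congrArg Subtype.val h)
  have : Subsingleton (ClassGroup R) := (ClassGroup.equivPic R).subsingleton
  exact regular_semilocal_domain_is_UFD_general R
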